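/- Let N ≥ 2. Let f : [0,∞) → ℝ be continuously differentiable and nondecreasing with f(0) = 0, f'(0) = 0, and liminf_{s→+∞} f(s)/s > 1. Suppose λ₂ > 1 is a real number such that: (i) there exists a nonzero function v : [0,1] → ℝ, continuously differentiable on [0,1] and twice differentiable on (0,1), with v'(0) = v'(1) = 0 and −v''(r) − ((N−1)/r)·v'(r) + v(r) = λ₂·v(r) for all r ∈ (0,1); and (ii) no such nonzero function exists for any λ ∈ (1, λ₂) in place of λ₂. Suppose further there exists u₀ > 0 with f(u₀) = u₀ and f'(u₀) > λ₂. Then there exists a function u : [0,1] → ℝ, continuously differentiable on [0,1] and twice differentiable on (0,1), with u'(0) = u'(1) = 0, u(r) > 0 for all r ∈ [0,1], u nondecreasing, u nonconstant, and −u''(r) − ((N−1)/r)·u'(r) + u(r) = f(u(r)) for all r ∈ (0,1). -/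

import Mathlib

open Set Filter

/-- `lam` is a radial Neumann eigenvalue of `-Δ + 1` on the unit ball of `ℝ^N`:
there is a nonzero radial eigenfunction `v` with `v'(0) = v'(1) = 0` solving
`-v'' - ((N-1)/r) v' + v = lam v` on `(0,1)`. -/
def IsRadialEigenvalue (N : ℕ) (lam : ℝ) : Prop :=
  ∃ v v' v'' : ℝ → ℝ,
    (∀ r ∈ Set.Icc (0:ℝ) 1, HasDerivWithinAt v (v' r) (Set.Icc 0 1) r) ∧
    ContinuousOn v' (Set.Icc 0 1) ∧
    (∀ r ∈ Set.Ioo (0:ℝ) 1, HasDerivAt v' (v'' r) r) ∧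
    v' 0 = 0 ∧ v' 1 = 0 ∧
    (∃ r ∈ Set.Icc (0:ℝ) 1, v r ≠ 0) ∧
    ∀ r ∈ Set.Ioo (0:ℝ) 1,
      -v'' r - ((N : ℝ) - 1) / r * v' r + v r = lam * v r

open Topology

/-- The weighted mean `∫₀¹ σⁿ h(u(rσ)) dσ`. A solution of `u'' + (n/r) u' = h(u)` with `u'(0) = 0`
is characterised by `u'(r) = r * radialMean n h u r`. -/
noncomputable def radialMean (n : ℕ) (h u : ℝ → ℝ) (r : ℝ) : ℝ :=
  ∫ σ in (0:ℝ)..1, σ ^ n * h (u (r * σ))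

lemma continuous_radialMean {n : ℕ} {h u : ℝ → ℝ} (hh : Continuous h) (hu : Continuous u) :
    Continuous (radialMean n h u) := by
  unfold radialMean
  apply intervalIntegral.continuous_parametric_intervalIntegral_of_continuous'
  fun_prop

lemma abs_radialMean_sub_le {n : ℕ} {h u v : ℝ → ℝ} (hh : Continuous h) (hu : Continuous u)
    (hv : Continuous v) {B r : ℝ}
    (hB : ∀ σ ∈ Icc (0:ℝ) 1, |h (u (r * σ)) - h (v (r * σ))| ≤ B) :
    |radialMean n h u r - radialMean n h v r| ≤ B := by
  unfold radialMean
  rw [← intervalIntegral.integral_sub (Continuous.intervalIntegrable (by fun_prop) _ _)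
    (Continuous.intervalIntegrable (by fun_prop) _ _), ← Real.norm_eq_abs]
  refine (intervalIntegral.norm_integral_le_of_norm_le_const (C := B) ?_).trans (by simp)
  intro σ hσ
  rw [uIoc_of_le zero_le_one] at hσ
  have h1 := hB σ ⟨hσ.1.le, hσ.2⟩
  rw [← mul_sub, Real.norm_eq_abs, abs_mul, abs_of_nonneg (pow_nonneg hσ.1.le n)]
  have h2 : σ ^ n ≤ 1 := pow_le_one₀ hσ.1.le hσ.2
  nlinarith [abs_nonneg (h (u (r * σ)) - h (v (r * σ))), pow_nonneg hσ.1.le n]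

lemma abs_radialMean_le {n : ℕ} {h u : ℝ → ℝ} {B r : ℝ} (hB : ∀ x, |h x| ≤ B) :
    |radialMean n h u r| ≤ B := by
  unfold radialMean
  rw [← Real.norm_eq_abs]
  refine (intervalIntegral.norm_integral_le_of_norm_le_const (C := B) ?_).trans (by simp)
  intro σ hσ
  rw [uIoc_of_le zero_le_one] at hσ
  have h1 := hB (u (r * σ))
  rw [Real.norm_eq_abs, abs_mul, abs_of_nonneg (pow_nonneg hσ.1.le n)]
  have h2 : σ ^ n ≤ 1 := pow_le_one₀ hσ.1.le hσ.2
  nlinarith [abs_nonneg (h (u (r * σ))), pow_nonneg hσ.1.le n]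

lemma radialMean_le {n : ℕ} {h u : ℝ → ℝ} (hh : Continuous h) (hu : Continuous u) {B r : ℝ}
    (hB0 : 0 ≤ B) (hB : ∀ x, h x ≤ B) :
    radialMean n h u r ≤ B := by
  unfold radialMean
  have := intervalIntegral.integral_mono_on (μ := MeasureTheory.volume) (a := 0) (b := 1)
    (f := fun σ : ℝ => σ ^ n * h (u (r * σ))) (g := fun _ => B)
    zero_le_one (Continuous.intervalIntegrable (by fun_prop) _ _)
    (Continuous.intervalIntegrable (by fun_prop) _ _) (fun σ hσ => by
      have h1 := hB (u (r * σ))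
      have h2 : σ ^ n ≤ 1 := pow_le_one₀ hσ.1 hσ.2
      nlinarith [pow_nonneg hσ.1 n])
  simpa using this

/-- `r * radialMean n h u r` satisfies the radial equation away from the origin. -/
lemma hasDerivAt_mul_radialMean {n : ℕ} {h u : ℝ → ℝ} (hh : Continuous h) (hu : Continuous u)
    {r : ℝ} (hr : 0 < r) :
    HasDerivAt (fun r => r * radialMean n h u r)
      (h (u r) - n / r * (r * radialMean n h u r)) r := by
  have key : ∀ r, r * (r ^ n * radialMean n h u r) = ∫ s in (0:ℝ)..r, s ^ n * h (u s) := by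
    intro r
    have := intervalIntegral.mul_integral_comp_mul_left (a := 0) (b := 1)
      (f := fun s => s ^ n * h (u s)) r
    simp only [mul_zero, mul_one] at this
    rw [← this]
    congr 1
    unfold radialMean
    rw [← intervalIntegral.integral_const_mul]
    congr 1
    ext σ
    ring
  have hd : HasDerivAt (fun r => ∫ s in (0:ℝ)..r, s ^ n * h (u s)) (r ^ n * h (u r)) r :=
    (Continuous.integral_hasStrictDerivAt (by fun_prop) 0 r).hasDerivAt
  have hp : HasDerivAt (fun r : ℝ => r ^ n) (n * r ^ (n - 1)) r := hasDerivAt_pow n r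
  have hrn : r ^ n ≠ 0 := (pow_pos hr n).ne'
  have hq := hd.div hp hrn
  have heq : (fun r => r * radialMean n h u r) =ᶠ[𝓝 r]
      ((fun r => ∫ s in (0:ℝ)..r, s ^ n * h (u s)) / fun r => r ^ n) := by
    filter_upwards [lt_mem_nhds hr] with x hx
    have : x ^ n ≠ 0 := (pow_pos hx n).ne'
    simp only [Pi.div_apply]
    rw [← key x]
    field_simp
  refine (hq.congr_of_eventuallyEq heq).congr_deriv ?_
  rw [← key r]
  rcases n with _ | n
  · simp
  · simp only [Nat.add_sub_cancel]
    field_simp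
    ring

/-- Well-posedness of the singular initial value problem `u'' + (n/r) u' = h(u)`,
`u(0) = d`, `u'(0) = 0` for bounded Lipschitz `h`, with Lipschitz dependence on `d`. -/
lemma exists_radial_flow (n : ℕ) {h : ℝ → ℝ} {L : NNReal} (hL : LipschitzWith L h) {C : ℝ}
    (hC : ∀ x, |h x| ≤ C) :
    ∃ U : ℝ → ℝ → ℝ, ∃ K : ℝ, 0 < K ∧
      (∀ d, U d 0 = d) ∧
      (∀ d r, HasDerivAt (U d) (r * radialMean n h (U d) r) r) ∧
      (∀ d e, ∀ r ∈ Icc (0:ℝ) 1, |U d r - U e r| ≤ K * |d - e|) ∧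
      ∀ c, h c = 0 → ∀ r, U c r = c := by
  have hh := hL.continuous
  have hL0 : (0:ℝ) ≤ L := L.2
  obtain ⟨l, hl⟩ : ∃ l : ℝ, l = L + 1 := ⟨_, rfl⟩
  have hl0 : 0 < l := by linarith
  have hC0 : 0 ≤ C := (abs_nonneg _).trans (hC 0)
  -- the operator on continuous functions
  let S : ℝ → (ℝ → ℝ) → ℝ → ℝ := fun d u r => d + ∫ t in (0:ℝ)..r, t * radialMean n h u t
  have hSd : ∀ d u, Continuous u → ∀ r, HasDerivAt (S d u) (r * radialMean n h u r) r := by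
    intro d u hu r
    have := continuous_radialMean (n := n) hh hu
    exact (Continuous.integral_hasStrictDerivAt (f := fun t => t * radialMean n h u t)
      (by fun_prop) 0 r).hasDerivAt.const_add d
  have hSc : ∀ d u, Continuous u → Continuous (S d u) := fun d u hu =>
    continuous_iff_continuousAt.2 fun r => (hSd d u hu r).continuousAt
  have hsub : ∀ (F : ℝ → ℝ) (r : ℝ), ∫ t in (0:ℝ)..r, t * F t
      = r * ∫ τ in (0:ℝ)..1, (r * τ) * F (r * τ) := by
    intro F r
    have := intervalIntegral.mul_integral_comp_mul_left (a := 0) (b := 1)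
      (f := fun t => t * F t) r
    simp only [mul_zero, mul_one] at this
    rw [← this]
  have hexpint : ∀ r : ℝ, ∫ τ in (0:ℝ)..1, r * (r * τ) * Real.exp (l * (r * τ) ^ 2)
      = (Real.exp (l * r ^ 2) - 1) / (2 * l) := by
    intro r
    have : ∀ τ ∈ uIcc (0:ℝ) 1, HasDerivAt (fun τ => Real.exp (l * (r * τ) ^ 2) / (2 * l))
        (r * (r * τ) * Real.exp (l * (r * τ) ^ 2)) τ := by
      intro τ _
      have h1 : HasDerivAt (fun τ : ℝ => l * (r * τ) ^ 2) (l * (2 * (r * τ) * r)) τ := by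
        have := (((hasDerivAt_id τ).const_mul r).pow 2).const_mul l
        simpa using this
      refine (h1.exp.div_const (2 * l)).congr_deriv ?_
      field_simp
    rw [intervalIntegral.integral_eq_sub_of_hasDerivAt this
      (Continuous.intervalIntegrable (by fun_prop) _ _)]
    simp
    ring
  have hSbound : ∀ d u, Continuous u → ∀ r, |S d u r| ≤ |d| + C * r ^ 2 := by
    intro d u hu r
    refine (abs_add_le _ _).trans (add_le_add le_rfl ?_)
    rw [← Real.norm_eq_abs]
    refine (intervalIntegral.norm_integral_le_of_norm_le_const (C := C * |r|) ?_).trans ?_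
    · intro t ht
      have : |t| ≤ |r| := by
        rcases uIoc_subset_uIcc ht with h1
        have := abs_sub_left_of_mem_uIcc h1
        simpa using this
      rw [Real.norm_eq_abs, abs_mul, mul_comm]
      have := abs_radialMean_le (n := n) (u := u) (r := t) hC
      gcongr
    · rw [sub_zero, mul_assoc, abs_mul_abs_self, sq]
  have hScontr : ∀ d e u v, Continuous u → Continuous v → ∀ D, 0 ≤ D →
      (∀ s, |u s - v s| ≤ D * Real.exp (l * s ^ 2)) →
      ∀ r, |S d u r - S e v r| ≤ |d - e| + 1 / 2 * D * Real.exp (l * r ^ 2) := by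
    intro d e u v hu hv D hD huv r
    have c1 := continuous_radialMean (n := n) hh hu
    have c2 := continuous_radialMean (n := n) hh hv
    have e1 : S d u r - S e v r = (d - e) + ∫ τ in (0:ℝ)..1, r * ((r * τ) *
        (radialMean n h u (r * τ) - radialMean n h v (r * τ))) := by
      simp only [S]
      rw [intervalIntegral.integral_const_mul,
        ← hsub (fun t => radialMean n h u t - radialMean n h v t)]
      simp only [mul_sub]
      rw [intervalIntegral.integral_sub (Continuous.intervalIntegrable (by fun_prop) _ _)
        (Continuous.intervalIntegrable (by fun_prop) _ _)]
      ring
    rw [e1]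
    refine (abs_add_le _ _).trans (add_le_add le_rfl ?_)
    rw [← Real.norm_eq_abs]
    refine (intervalIntegral.norm_integral_le_of_norm_le zero_le_one
      (g := fun τ => L * D * (r * (r * τ) * Real.exp (l * (r * τ) ^ 2))) ?_
      (Continuous.intervalIntegrable (by fun_prop) _ _)).trans ?_
    · refine Eventually.of_forall fun τ hτ => ?_
      have hb : |radialMean n h u (r * τ) - radialMean n h v (r * τ)|
          ≤ L * D * Real.exp (l * (r * τ) ^ 2) := by
        apply abs_radialMean_sub_le hh hu hv
        intro σ hσ
        have h1 := hL.dist_le_mul (u (r * τ * σ)) (v (r * τ * σ))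
        rw [Real.dist_eq, Real.dist_eq] at h1
        refine h1.trans ?_
        rw [mul_assoc (L:ℝ)]
        refine mul_le_mul_of_nonneg_left ((huv _).trans ?_) hL0
        refine mul_le_mul_of_nonneg_left (Real.exp_le_exp.2 ?_) hD
        refine mul_le_mul_of_nonneg_left ?_ hl0.le
        rw [mul_pow _ σ]
        have : σ ^ 2 ≤ 1 := pow_le_one₀ hσ.1 hσ.2
        nlinarith [sq_nonneg (r * τ)]
      have e2 : r * (r * τ * (radialMean n h u (r * τ) - radialMean n h v (r * τ)))
          = (r * (r * τ)) * (radialMean n h u (r * τ) - radialMean n h v (r * τ)) := by ring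
      have h0 : 0 ≤ r * (r * τ) := by nlinarith [mul_nonneg (mul_self_nonneg r) hτ.1.le]
      rw [e2, Real.norm_eq_abs, abs_mul, abs_of_nonneg h0]
      nlinarith [mul_le_mul_of_nonneg_left hb h0]
    · rw [intervalIntegral.integral_const_mul, hexpint]
      have hE := Real.exp_pos (l * r ^ 2)
      have : L * D * ((Real.exp (l * r ^ 2) - 1) / (2 * l))
          ≤ L * D * (Real.exp (l * r ^ 2) / (2 * l)) := by
        gcongr
        linarith
      refine this.trans ?_
      have h3 : L / l ≤ 1 := by rw [div_le_one hl0]; linarith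
      calc L * D * (Real.exp (l * r ^ 2) / (2 * l))
          = (L / l) * (1 / 2 * D * Real.exp (l * r ^ 2)) := by field_simp
        _ ≤ 1 * (1 / 2 * D * Real.exp (l * r ^ 2)) := by gcongr
        _ = _ := one_mul _
  -- the weighted operator on bounded continuous functions
  let lift : BoundedContinuousFunction ℝ ℝ → ℝ → ℝ := fun w s => Real.exp (l * s ^ 2) * w s
  have hlift : ∀ w, Continuous (lift w) := fun w => by
    have := w.continuous
    simp only [lift]
    fun_prop
  have hweight : ∀ r : ℝ, Real.exp (-(l * r ^ 2)) * Real.exp (l * r ^ 2) = 1 := fun r => by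
    rw [← Real.exp_add]; simp
  let mk : ∀ u : ℝ → ℝ, Continuous u → ∀ d : ℝ, (∀ r, |u r| ≤ |d| + C * r ^ 2) →
      BoundedContinuousFunction ℝ ℝ := fun u hu d hd =>
    BoundedContinuousFunction.ofNormedAddCommGroup
      (fun r => Real.exp (-(l * r ^ 2)) * u r) (by fun_prop) (|d| + C / l) (by
        intro r
        rw [Real.norm_eq_abs, abs_mul, abs_of_pos (Real.exp_pos _)]
        have h1 := hd r
        have hE := Real.exp_pos (-(l * r ^ 2))
        have h2 : Real.exp (-(l * r ^ 2)) ≤ 1 := Real.exp_le_one_iff.2 (by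
          have : 0 ≤ l * r ^ 2 := by positivity
          linarith)
        have h3 : Real.exp (-(l * r ^ 2)) * (l * r ^ 2) ≤ 1 := by
          rw [← hweight r]
          gcongr
          linarith [Real.add_one_le_exp (l * r ^ 2)]
        calc Real.exp (-(l * r ^ 2)) * |u r|
            ≤ Real.exp (-(l * r ^ 2)) * (|d| + C * r ^ 2) := by gcongr
          _ = Real.exp (-(l * r ^ 2)) * |d|
              + (Real.exp (-(l * r ^ 2)) * (l * r ^ 2)) * (C / l) := by field_simp
          _ ≤ 1 * |d| + 1 * (C / l) := by gcongr
          _ = _ := by ring)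
  let T : ℝ → BoundedContinuousFunction ℝ ℝ → BoundedContinuousFunction ℝ ℝ := fun d w =>
    mk (S d (lift w)) (hSc d _ (hlift w)) d (hSbound d _ (hlift w))
  have hTapp : ∀ d w r, T d w r = Real.exp (-(l * r ^ 2)) * S d (lift w) r := fun _ _ _ => rfl
  have hTdist : ∀ d e w z, dist (T d w) (T e z) ≤ |d - e| + 1 / 2 * dist w z := by
    intro d e w z
    rw [BoundedContinuousFunction.dist_le (by positivity)]
    intro r
    have hb := hScontr d e (lift w) (lift z) (hlift w) (hlift z) (dist w z) dist_nonneg (by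
      intro s
      have := BoundedContinuousFunction.dist_coe_le_dist (f := w) (g := z) s
      rw [Real.dist_eq] at this
      simp only [lift]
      rw [← mul_sub, abs_mul, abs_of_pos (Real.exp_pos _), mul_comm]
      gcongr) r
    rw [hTapp, hTapp, Real.dist_eq, ← mul_sub, abs_mul, abs_of_pos (Real.exp_pos _)]
    have h2 : Real.exp (-(l * r ^ 2)) ≤ 1 := Real.exp_le_one_iff.2 (by
      have : 0 ≤ l * r ^ 2 := by positivity
      linarith)
    calc _ ≤ Real.exp (-(l * r ^ 2)) *
          (|d - e| + 1 / 2 * dist w z * Real.exp (l * r ^ 2)) := by gcongr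
      _ = Real.exp (-(l * r ^ 2)) * |d - e| + 1 / 2 * dist w z *
          (Real.exp (-(l * r ^ 2)) * Real.exp (l * r ^ 2)) := by ring
      _ ≤ 1 * |d - e| + 1 / 2 * dist w z * 1 := by rw [hweight]; gcongr
      _ = _ := by ring
  have hTc : ∀ d, ContractingWith (1 / 2 : NNReal) (T d) := fun d =>
    ⟨by rw [← NNReal.coe_lt_coe]; norm_num,
      LipschitzWith.of_dist_le_mul fun w z => by simpa using hTdist d d w z⟩
  let w : ℝ → BoundedContinuousFunction ℝ ℝ := fun d => (hTc d).fixedPoint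
  have hw : ∀ d, T d (w d) = w d := fun d => (hTc d).fixedPoint_isFixedPt
  have hU : ∀ d r, lift (w d) r = S d (lift (w d)) r := by
    intro d r
    have h1 := hTapp d (w d) r
    rw [hw] at h1
    simp only [lift] at h1 ⊢
    rw [h1, ← mul_assoc, mul_comm (Real.exp (l * r ^ 2)), hweight, one_mul]
  refine ⟨fun d => lift (w d), 2 * Real.exp l, by positivity, ?_, ?_, ?_, ?_⟩
  · intro d
    simp only [hU]
    simp [S]
  · intro d r
    have := hSd d _ (hlift (w d)) r
    rwa [show S d (lift (w d)) = lift (w d) from (funext (hU d)).symm] at this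
  · intro d e r hr
    have h1 := hTdist d e (w d) (w e)
    rw [hw, hw] at h1
    have h2 := BoundedContinuousFunction.dist_coe_le_dist (f := w d) (g := w e) r
    rw [Real.dist_eq] at h2
    simp only [lift]
    rw [← mul_sub, abs_mul, abs_of_pos (Real.exp_pos _)]
    have h3 : l * r ^ 2 ≤ l := by nlinarith [pow_le_one₀ (n := 2) hr.1 hr.2]
    calc Real.exp (l * r ^ 2) * |w d r - w e r| ≤ Real.exp l * (2 * |d - e|) := by
          gcongr
          linarith
      _ = _ := by ring
  · intro c hc
    have hconst : ∀ r, |(fun _ : ℝ => c) r| ≤ |c| + C * r ^ 2 := fun r => by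
      have : 0 ≤ C * r ^ 2 := by positivity
      simp only
      linarith
    have h1 : Function.IsFixedPt (T c) (mk (fun _ => c) continuous_const c hconst) := by
      have h2 : lift (mk (fun _ => c) continuous_const c hconst) = fun _ => c := by
        ext r
        change Real.exp (l * r ^ 2) * (Real.exp (-(l * r ^ 2)) * c) = c
        rw [← mul_assoc, mul_comm (Real.exp (l * r ^ 2)), hweight, one_mul]
      ext r
      rw [hTapp, h2]
      change Real.exp (-(l * r ^ 2)) * _ = Real.exp (-(l * r ^ 2)) * c
      simp [S, radialMean, hc]
    intro r
    have h3 := (hTc c).fixedPoint_unique h1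
    change Real.exp (l * r ^ 2) * (w c) r = c
    rw [show w c = _ from h3.symm]
    change Real.exp (l * r ^ 2) * (Real.exp (-(l * r ^ 2)) * c) = c
    rw [← mul_assoc, mul_comm (Real.exp (l * r ^ 2)), hweight, one_mul]

/-- A radial Neumann eigenfunction has `v' = O(r)` at the origin. -/
lemma abs_deriv_le_of_radial_eigenfunction {n : ℕ} {k V : ℝ} (hk : 0 ≤ k) {v p p' : ℝ → ℝ}
    (hpc : ContinuousOn p (Icc 0 1)) (hp : ∀ r ∈ Ioo (0:ℝ) 1, HasDerivAt p (p' r) r)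
    (hp0 : p 0 = 0) (heq : ∀ r ∈ Ioo (0:ℝ) 1, p' r + n / r * p r = -k * v r)
    (hV : ∀ r ∈ Icc (0:ℝ) 1, |v r| ≤ V) {r : ℝ} (hr : r ∈ Ioc (0:ℝ) 1) :
    |p r| ≤ k * V * r := by
  have hQ : ∀ s ∈ Ioo (0:ℝ) r, HasDerivAt (fun r => r ^ n * p r) (s ^ n * (-k * v s)) s := by
    intro s hs
    have hs1 : s ∈ Ioo (0:ℝ) 1 := ⟨hs.1, hs.2.trans_le hr.2⟩
    refine ((hasDerivAt_pow n s).mul (hp s hs1)).congr_deriv ?_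
    rw [← heq s hs1]
    have hs0 : s ≠ 0 := hs.1.ne'
    rcases n with _ | n
    · simp
    · simp only [Nat.add_sub_cancel]
      field_simp
      ring
  have hQc : ContinuousOn (fun r => r ^ n * p r) (Icc 0 r) :=
    (continuousOn_id.pow n).mul (hpc.mono (Icc_subset_Icc le_rfl hr.2))
  obtain ⟨s, hs, hs2⟩ := exists_hasDerivAt_eq_slope _ _ hr.1 hQc hQ
  rw [hp0, mul_zero, sub_zero, sub_zero, eq_div_iff hr.1.ne'] at hs2
  have hrn : 0 < r ^ n := pow_pos hr.1 n
  have h1 : p r = s ^ n / r ^ n * (-k * v s) * r := by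
    field_simp
    linear_combination -hs2
  have h2 : s ^ n / r ^ n ≤ 1 := by
    rw [div_le_one hrn]
    exact pow_le_pow_left₀ hs.1.le hs.2.le n
  have h3 : 0 ≤ s ^ n / r ^ n := div_nonneg (pow_nonneg hs.1.le n) hrn.le
  have h4 := hV s ⟨hs.1.le, hs.2.le.trans hr.2⟩
  rw [h1, abs_mul, abs_mul, abs_mul, abs_neg, abs_of_nonneg hk, abs_of_pos hr.1, abs_of_nonneg h3]
  have hr0 := hr.1.le
  calc s ^ n / r ^ n * (k * |v s|) * r ≤ 1 * (k * V) * r := by gcongr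
    _ = _ := by ring

/-- Sturm–Picone comparison for the fluxes: a solution of `u'' + (n/r) u' = h(u)` which is strictly
increasing on `[0,1]` cannot oscillate more slowly around `c` than a Neumann eigenfunction. -/
lemma eigenfunction_eq_zero_of_increasing {n : ℕ} (hn : 1 ≤ n) {k k' : ℝ} (hk : 0 < k)
    (hkk' : k < k') {v p p' : ℝ → ℝ}
    (hvc : ContinuousOn v (Icc 0 1)) (hv : ∀ r ∈ Ioo (0:ℝ) 1, HasDerivAt v (p r) r)
    (hpc : ContinuousOn p (Icc 0 1)) (hp : ∀ r ∈ Ioo (0:ℝ) 1, HasDerivAt p (p' r) r)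
    (hp0 : p 0 = 0) (hp1 : p 1 = 0)
    (heq : ∀ r ∈ Ioo (0:ℝ) 1, p' r + n / r * p r = -k * v r)
    {h u : ℝ → ℝ} (hh : Continuous h)
    (hu : ∀ r, HasDerivAt u (r * radialMean n h u r) r) {c : ℝ}
    (hnear : ∀ r ∈ Icc (0:ℝ) 1, k' * (u r - c) ^ 2 ≤ -h (u r) * (u r - c))
    (hpos : ∀ r ∈ Icc (0:ℝ) 1, 0 < radialMean n h u r) :
    ∀ r ∈ Ioo (0:ℝ) 1, v r = 0 := by
  have huc : Continuous u := continuous_iff_continuousAt.2 fun r => (hu r).continuousAt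
  have hgc := continuous_radialMean (n := n) hh huc
  have hz : ∀ r, 0 < r → HasDerivAt (fun r => r * radialMean n h u r)
      (h (u r) - n / r * (r * radialMean n h u r)) r :=
    fun r hr => hasDerivAt_mul_radialMean hh huc hr
  set g := radialMean n h u with hg
  let W : ℝ → ℝ := fun r => r ^ n * p r * (p r * (u r - c) / (r * g r) - v r)
  let D : ℝ → ℝ := fun r => r ^ n * (k * v r ^ 2 - 2 * k * v r * (p r * (u r - c) / (r * g r))
    - h (u r) * (u r - c) * (p r / (r * g r)) ^ 2)
  have hW : ∀ r ∈ Ioo (0:ℝ) 1, HasDerivAt W (D r) r := by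
    intro r hr
    have hr0 : r ≠ 0 := hr.1.ne'
    have hgr : g r ≠ 0 := (hpos r ⟨hr.1.le, hr.2.le⟩).ne'
    have h1 := ((hasDerivAt_pow n r).mul (hp r hr)).mul
      ((((hp r hr).mul ((hu r).sub_const c)).div (hz r hr.1) (mul_ne_zero hr0 hgr)).sub (hv r hr))
    refine h1.congr_deriv ?_
    have h2 : p' r = -k * v r - n / r * p r := by linarith [heq r hr]
    have h3 : (n:ℝ) * r ^ (n - 1) = n / r * r ^ n := by
      obtain ⟨m, rfl⟩ : ∃ m, n = m + 1 := ⟨n - 1, by omega⟩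
      simp only [Nat.add_sub_cancel]
      field_simp
      ring
    simp only [D, Pi.mul_apply, Pi.div_apply, Pi.sub_apply]
    rw [h2, h3]
    field_simp
    ring
  have hDlow : ∀ r ∈ Ioo (0:ℝ) 1, r ^ n * (k * (v r - p r * (u r - c) / (r * g r)) ^ 2
      + (k' - k) * (p r * (u r - c) / (r * g r)) ^ 2) ≤ D r := by
    intro r hr
    have h1 := mul_le_mul_of_nonneg_right (hnear r ⟨hr.1.le, hr.2.le⟩)
      (sq_nonneg (p r / (r * g r)))
    refine mul_le_mul_of_nonneg_left ?_ (pow_nonneg hr.1.le n)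
    have h2 : p r * (u r - c) / (r * g r) = (u r - c) * (p r / (r * g r)) := by ring
    rw [h2]
    nlinarith
  have hDnn : ∀ r ∈ Ioo (0:ℝ) 1, 0 ≤ D r := fun r hr => le_trans (by
    have := pow_nonneg hr.1.le n
    have : 0 ≤ k' - k := by linarith
    positivity) (hDlow r hr)
  have hmono : MonotoneOn W (Ioc 0 1) := by
    apply monotoneOn_of_deriv_nonneg (convex_Ioc 0 1)
    · have hs : Ioc (0:ℝ) 1 ⊆ Icc 0 1 := Ioc_subset_Icc_self
      have hpc' := hpc.mono hs
      have hvc' := hvc.mono hs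
      refine ((continuousOn_id.pow n).mul hpc').mul (ContinuousOn.sub (ContinuousOn.div
        (hpc'.mul (by fun_prop)) (by fun_prop) ?_) hvc')
      exact fun r hr => mul_ne_zero hr.1.ne' (hpos r (hs hr)).ne'
    · rw [interior_Ioc]
      exact fun r hr => (hW r hr).differentiableAt.differentiableWithinAt
    · rw [interior_Ioc]
      exact fun r hr => by rw [(hW r hr).deriv]; exact hDnn r hr
  obtain ⟨V, hV⟩ := isCompact_Icc.exists_bound_of_continuousOn hvc
  obtain ⟨Y, hY⟩ := (isCompact_Icc (a := (0:ℝ)) (b := 1)).exists_bound_of_continuousOn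
    (f := fun r => u r - c) (by fun_prop)
  obtain ⟨r₀, hr₀, hmin⟩ := (isCompact_Icc (a := (0:ℝ)) (b := 1)).exists_isMinOn
    ⟨0, by simp⟩ hgc.continuousOn
  have hg0 := hpos r₀ hr₀
  have hV0 : 0 ≤ V := (norm_nonneg _).trans (hV 0 (by simp))
  have hY0 : 0 ≤ Y := (norm_nonneg _).trans (hY 0 (by simp))
  have hWb : ∀ r ∈ Ioo (0:ℝ) 1, |W r| ≤ (k * V * (k * V * Y / g r₀ + V)) * r := by
    intro r hr
    have hr' : r ∈ Icc (0:ℝ) 1 := ⟨hr.1.le, hr.2.le⟩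
    have hr0 := hr.1
    have hpb := abs_deriv_le_of_radial_eigenfunction hk.le hpc hp hp0 heq hV ⟨hr.1, hr.2.le⟩
    have hgm : g r₀ ≤ g r := hmin hr'
    have hvb : |v r| ≤ V := hV r hr'
    have hyb : |u r - c| ≤ Y := hY r hr'
    have h1 : |p r * (u r - c) / (r * g r)| ≤ k * V * Y / g r₀ := by
      rw [abs_div, abs_mul, abs_of_pos (mul_pos hr0 (hpos r hr'))]
      calc |p r| * |u r - c| / (r * g r) ≤ (k * V * r) * Y / (r * g r₀) := by gcongr
        _ = _ := by field_simp
    simp only [W]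
    rw [abs_mul, abs_mul, abs_of_nonneg (pow_nonneg hr0.le n)]
    have h2 : r ^ n ≤ 1 := pow_le_one₀ hr0.le hr.2.le
    calc r ^ n * |p r| * |p r * (u r - c) / (r * g r) - v r|
        ≤ 1 * (k * V * r) * (k * V * Y / g r₀ + V) := by
          gcongr
          exact (abs_sub _ _).trans (add_le_add h1 hvb)
      _ = _ := by ring
  have hlim : Tendsto W (𝓝[>] 0) (𝓝 0) := by
    apply squeeze_zero_norm' (a := fun r => (k * V * (k * V * Y / g r₀ + V)) * r)
    · filter_upwards [Ioo_mem_nhdsGT (zero_lt_one' ℝ)] with r hr using hWb r hr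
    · refine Tendsto.mono_left ?_ nhdsWithin_le_nhds
      have : Continuous fun r : ℝ => (k * V * (k * V * Y / g r₀ + V)) * r := by fun_prop
      simpa using this.tendsto 0
  have hW0 : ∀ r ∈ Ioo (0:ℝ) 1, W r = 0 := by
    intro r hr
    apply le_antisymm
    · refine (hmono ⟨hr.1, hr.2.le⟩ ⟨one_pos, le_rfl⟩ hr.2.le).trans_eq ?_
      simp [W, hp1]
    · refine le_of_tendsto hlim ?_
      filter_upwards [Ioo_mem_nhdsGT hr.1] with s hs
      exact hmono ⟨hs.1, (hs.2.trans hr.2).le⟩ ⟨hr.1, hr.2.le⟩ hs.2.le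
  intro r hr
  have hD0 : D r = 0 := by
    have : HasDerivAt W 0 r := (hasDerivAt_const r (0:ℝ)).congr_of_eventuallyEq (by
      filter_upwards [Ioo_mem_nhds hr.1 hr.2] with s hs using hW0 s hs)
    exact (hW r hr).unique this
  have h1 := hDlow r hr
  rw [hD0] at h1
  have h2 := nonpos_of_mul_nonpos_right h1 (pow_pos hr.1 n)
  have h3 : (0:ℝ) ≤ (k' - k) * (p r * (u r - c) / (r * g r)) ^ 2 :=
    mul_nonneg (by linarith) (sq_nonneg _)
  have h4 := mul_nonneg hk.le (sq_nonneg (v r - p r * (u r - c) / (r * g r)))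
  have h5 : (p r * (u r - c) / (r * g r)) ^ 2 = 0 :=
    (mul_eq_zero.1 (le_antisymm (by linarith) h3)).resolve_left (by linarith)
  have h6 : (v r - p r * (u r - c) / (r * g r)) ^ 2 = 0 :=
    (mul_eq_zero.1 (le_antisymm (by linarith) h4)).resolve_left hk.ne'
  have h7 := pow_eq_zero_iff (two_ne_zero) |>.1 h5
  have h8 := pow_eq_zero_iff (two_ne_zero) |>.1 h6
  linarith

/-- Backward uniqueness at a critical point lying on an equilibrium. -/
lemma eq_of_radialMean_eq_zero {n : ℕ} {h u : ℝ → ℝ} {L : NNReal} (hL : LipschitzWith L h)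
    (hu : ∀ r, HasDerivAt u (r * radialMean n h u r) r) {r₀ : ℝ} (hr₀ : 0 < r₀)
    (hg0 : radialMean n h u r₀ = 0) (hh0 : h (u r₀) = 0) : u 0 = u r₀ := by
  have hh := hL.continuous
  have huc : Continuous u := continuous_iff_continuousAt.2 fun r => (hu r).continuousAt
  have hz : ∀ r, 0 < r → HasDerivAt (fun r => r * radialMean n h u r)
      (h (u r) - n / r * (r * radialMean n h u r)) r :=
    fun r hr => hasDerivAt_mul_radialMean hh huc hr
  have hL0 : (0:ℝ) ≤ L := L.2
  set c := u r₀ with hc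
  have hpos : ∀ e ∈ Ioo (0:ℝ) r₀, u e = c := by
    intro e he
    let K : ℝ := 1 + L + 2 * n / e
    let z : ℝ → ℝ := fun r => r * radialMean n h u r
    let P : ℝ → ℝ := fun r => Real.exp (K * r) * ((u r - c) ^ 2 + z r ^ 2)
    have hP : ∀ r, 0 < r → HasDerivAt P (Real.exp (K * r) * (K * ((u r - c) ^ 2 + z r ^ 2)
        + (2 * (u r - c) * z r + 2 * z r * (h (u r) - n / r * z r)))) r := by
      intro r hr
      have h1 : HasDerivAt (fun r => Real.exp (K * r)) (Real.exp (K * r) * K) r := by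
        simpa using ((hasDerivAt_id r).const_mul K).exp
      refine (h1.mul ((((hu r).sub_const c).pow 2).add ((hz r hr).pow 2))).congr_deriv ?_
      simp only [Pi.add_apply, Pi.pow_apply, z]
      norm_num
      ring
    have hmono : MonotoneOn P (Icc e r₀) := by
      apply monotoneOn_of_deriv_nonneg (convex_Icc e r₀)
      · exact fun r hr => (hP r (he.1.trans_le hr.1)).continuousAt.continuousWithinAt
      · rw [interior_Icc]
        exact fun r hr => (hP r (he.1.trans hr.1)).differentiableAt.differentiableWithinAt
      · rw [interior_Icc]
        intro r hr
        have hr0 : 0 < r := he.1.trans hr.1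
        rw [(hP r hr0).deriv]
        refine mul_nonneg (Real.exp_pos _).le ?_
        have h1 : |h (u r)| ≤ L * |u r - c| := by
          have := hL.dist_le_mul (u r) c
          rwa [hh0, Real.dist_eq, Real.dist_eq, sub_zero] at this
        have h2 : (n:ℝ) / r ≤ n / e := by
          have := he.1
          have := hr.1.le
          gcongr
        have h3 : 0 ≤ 2 * (n / e - n / r) * z r ^ 2 :=
          mul_nonneg (by linarith) (sq_nonneg _)
        have h4 : -(2 * z r * h (u r)) ≤ L * ((u r - c) ^ 2 + z r ^ 2) := by
          have h5 : -(z r * h (u r)) ≤ |z r| * |h (u r)| := by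
            rw [← abs_mul]; exact neg_le_abs _
          have h6 : |z r| * |h (u r)| ≤ |z r| * (L * |u r - c|) := by gcongr
          have h7 : 2 * |z r| * |u r - c| ≤ |z r| ^ 2 + |u r - c| ^ 2 :=
            two_mul_le_add_sq _ _
          rw [sq_abs, sq_abs] at h7
          nlinarith [mul_le_mul_of_nonneg_left h7 hL0]
        have h8 : 0 ≤ (n:ℝ) / e * (u r - c) ^ 2 := by
          have := he.1
          positivity
        have h9 : K = 1 + L + 2 * (n / e) := by simp only [K]; ring
        rw [h9]
        nlinarith [sq_nonneg (u r - c + z r)]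
    have h1 := hmono ⟨le_rfl, he.2.le⟩ ⟨he.2.le, le_rfl⟩ he.2.le
    have h2 : P r₀ = 0 := by simp [P, z, hg0, hc]
    rw [h2] at h1
    have h3 := nonpos_of_mul_nonpos_right h1 (Real.exp_pos _)
    have h4 : (u e - c) ^ 2 = 0 := le_antisymm (by nlinarith [sq_nonneg (z e)]) (sq_nonneg _)
    linarith [pow_eq_zero_iff (two_ne_zero) |>.1 h4]
  have hlim : Tendsto u (𝓝[>] 0) (𝓝 (u 0)) := huc.continuousWithinAt
  refine tendsto_nhds_unique hlim (tendsto_const_nhds.congr' ?_)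
  filter_upwards [Ioo_mem_nhdsGT hr₀] with e he using (hpos e he).symm

lemma radialMean_pos {n : ℕ} {h u : ℝ → ℝ} (hh : Continuous h) (hu : Continuous u) {r : ℝ}
    (hr : r ∈ Icc (0:ℝ) 1) (hpos : ∀ s ∈ Icc (0:ℝ) 1, 0 < h (u s)) :
    0 < radialMean n h u r := by
  refine intervalIntegral.intervalIntegral_pos_of_pos_on
    (Continuous.intervalIntegrable (by fun_prop) _ _) ?_ zero_lt_one
  intro σ hσ
  exact mul_pos (pow_pos hσ.1 n)
    (hpos _ ⟨mul_nonneg hr.1 hσ.1.le, mul_le_one₀ hr.2 hσ.1.le hσ.2.le⟩)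

lemma monotoneOn_of_radialMean_nonneg {n : ℕ} {h u : ℝ → ℝ}
    (hu : ∀ r, HasDerivAt u (r * radialMean n h u r) r)
    (hg : ∀ r ∈ Icc (0:ℝ) 1, 0 ≤ radialMean n h u r) : MonotoneOn u (Icc 0 1) := by
  apply monotoneOn_of_deriv_nonneg (convex_Icc 0 1)
  · exact fun r _ => (hu r).continuousAt.continuousWithinAt
  · exact fun r _ => (hu r).differentiableAt.differentiableWithinAt
  · rw [interior_Icc]
    intro r hr
    rw [(hu r).deriv]
    exact mul_nonneg hr.1.le (hg r ⟨hr.1.le, hr.2.le⟩)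

/-- Shooting from `(a, c)`: if `h` vanishes below `a`, is positive on `(a, c)` and crosses zero at
`c` with slope steeper than a Neumann eigenvalue, some trajectory increases up to its first critical
point, which is `r = 1`. -/
lemma exists_increasing_neumann_solution {n : ℕ} (hn : 1 ≤ n) {k k' : ℝ} (hk : 0 < k)
    (hkk' : k < k') {v p p' : ℝ → ℝ}
    (hvc : ContinuousOn v (Icc 0 1)) (hv : ∀ r ∈ Ioo (0:ℝ) 1, HasDerivAt v (p r) r)
    (hpc : ContinuousOn p (Icc 0 1)) (hp : ∀ r ∈ Ioo (0:ℝ) 1, HasDerivAt p (p' r) r)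
    (hp0 : p 0 = 0) (hp1 : p 1 = 0)
    (heq : ∀ r ∈ Ioo (0:ℝ) 1, p' r + n / r * p r = -k * v r)
    (hvne : ∃ r ∈ Ioo (0:ℝ) 1, v r ≠ 0)
    {h : ℝ → ℝ} {L : NNReal} (hL : LipschitzWith L h) {C : ℝ} (hC : ∀ x, |h x| ≤ C)
    {a c η : ℝ} (hac : a < c) (hη : 0 < η)
    (ha : ∀ s ≤ a, h s = 0) (hpos : ∀ s ∈ Ioo a c, 0 < h s) (hc : h c = 0)
    (hnear : ∀ x, |x - c| ≤ η → k' * (x - c) ^ 2 ≤ -h x * (x - c)) :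
    ∃ u : ℝ → ℝ, u 0 ∈ Ioo a c ∧ (∀ r, HasDerivAt u (r * radialMean n h u r) r) ∧
      (∀ r ∈ Ico (0:ℝ) 1, 0 < radialMean n h u r) ∧ radialMean n h u 1 = 0 := by
  obtain ⟨U, K, hK, hU0, hUd, hUlip, hUconst⟩ := exists_radial_flow n hL hC
  have hh := hL.continuous
  have hL0 : (0:ℝ) ≤ L := L.2
  have hUc : ∀ d, Continuous (U d) := fun d =>
    continuous_iff_continuousAt.2 fun r => (hUd d r).continuousAt
  have hGlip : ∀ d e, ∀ r ∈ Icc (0:ℝ) 1,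
      |radialMean n h (U d) r - radialMean n h (U e) r| ≤ L * K * |d - e| := by
    intro d e r hr
    refine abs_radialMean_sub_le hh (hUc d) (hUc e) fun σ hσ => ?_
    have h1 := hL.dist_le_mul (U d (r * σ)) (U e (r * σ))
    rw [Real.dist_eq, Real.dist_eq] at h1
    have h2 := hUlip d e (r * σ) ⟨mul_nonneg hr.1 hσ.1, mul_le_one₀ hr.2 hσ.1 hσ.2⟩
    rw [mul_assoc]
    exact h1.trans (mul_le_mul_of_nonneg_left h2 hL0)
  have hLK : 0 < L * K + 1 := by positivity
  by_contra hno
  have hcover : Ioo a c ⊆ {d | ∀ r ∈ Icc (0:ℝ) 1, 0 < radialMean n h (U d) r} ∪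
      {d | ∃ r ∈ Icc (0:ℝ) 1, radialMean n h (U d) r < 0} := by
    intro d hd
    by_contra hcon
    simp only [mem_union, mem_ofPred_eq, not_or, not_exists, not_and, not_forall, not_lt] at hcon
    obtain ⟨⟨r, hr, hr0⟩, hnn⟩ := hcon
    have hpos' : ∀ r ∈ Ico (0:ℝ) 1, 0 < radialMean n h (U d) r := by
      intro s hs
      refine lt_of_le_of_ne (hnn s ⟨hs.1, hs.2.le⟩) fun hs0 => ?_
      rcases hs.1.eq_or_lt with rfl | hs1
      · have : radialMean n h (U d) 0 = 1 / (n + 1) * h d := by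
          simp [radialMean, hU0]
        have h1 := hpos d hd
        have : 0 < radialMean n h (U d) 0 := by rw [this]; positivity
        exact this.ne hs0
      · have hmin : IsLocalMin (fun r => r * radialMean n h (U d) r) s := by
          filter_upwards [Ioo_mem_nhds hs1 hs.2] with t ht
          rw [← hs0, mul_zero]
          exact mul_nonneg ht.1.le (hnn t ⟨ht.1.le, ht.2.le⟩)
        have h1 := hmin.hasDerivAt_eq_zero (hasDerivAt_mul_radialMean hh (hUc d) hs1)
        rw [← hs0, mul_zero, mul_zero, sub_zero] at h1
        have h2 := eq_of_radialMean_eq_zero hL (hUd d) hs1 hs0.symm h1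
        rw [← h2, hU0] at h1
        exact (hpos d hd).ne' h1
    have hr1 : r = 1 := by
      by_contra hne
      exact (hpos' r ⟨hr.1, lt_of_le_of_ne hr.2 hne⟩).not_ge hr0
    subst hr1
    exact hno ⟨U d, by rwa [hU0], hUd d, hpos', le_antisymm hr0 (hnn 1 hr)⟩
  have hAopen : IsOpen {d | ∀ r ∈ Icc (0:ℝ) 1, 0 < radialMean n h (U d) r} := by
    rw [Metric.isOpen_iff]
    intro d hd
    obtain ⟨r₀, hr₀, hmin⟩ := (isCompact_Icc (a := (0:ℝ)) (b := 1)).exists_isMinOn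
      ⟨0, by simp⟩ (continuous_radialMean (n := n) hh (hUc d)).continuousOn
    have hm := hd r₀ hr₀
    refine ⟨radialMean n h (U d) r₀ / (L * K + 1), by positivity, fun e he r hr => ?_⟩
    rw [Metric.mem_ball, Real.dist_eq, lt_div_iff₀ hLK] at he
    have h1 := (abs_le.1 (hGlip e d r hr)).1
    have h2 : radialMean n h (U d) r₀ ≤ radialMean n h (U d) r := hmin hr
    nlinarith [abs_nonneg (e - d)]
  have hBopen : IsOpen {d | ∃ r ∈ Icc (0:ℝ) 1, radialMean n h (U d) r < 0} := by
    rw [Metric.isOpen_iff]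
    rintro d ⟨r, hr, hd⟩
    refine ⟨-radialMean n h (U d) r / (L * K + 1), div_pos (by linarith) hLK,
      fun e he => ⟨r, hr, ?_⟩⟩
    rw [Metric.mem_ball, Real.dist_eq, lt_div_iff₀ hLK] at he
    have h1 := (abs_le.1 (hGlip e d r hr)).2
    nlinarith [abs_nonneg (e - d)]
  have hdisj : Disjoint {d | ∀ r ∈ Icc (0:ℝ) 1, 0 < radialMean n h (U d) r}
      {d | ∃ r ∈ Icc (0:ℝ) 1, radialMean n h (U d) r < 0} := by
    rw [Set.disjoint_left]
    rintro d h1 ⟨r, hr, h2⟩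
    exact (h1 r hr).not_gt h2
  have hne : (Ioo a c ∩ {d | ∀ r ∈ Icc (0:ℝ) 1, 0 < radialMean n h (U d) r}).Nonempty := by
    have hK1 : 0 < K + 1 := by linarith
    have hstep : 0 < (c - a) / (K + 1) := div_pos (by linarith) hK1
    have hstep' : (c - a) / (K + 1) * (K + 1) = c - a := by field_simp
    set d := a + (c - a) / (K + 1) with hd
    have hdI : d ∈ Ioo a c := ⟨by linarith, by nlinarith⟩
    have hlt : ∀ r ∈ Icc (0:ℝ) 1, U d r < c := by
      intro r hr
      have h1 := (abs_le.1 (hUlip d a r hr)).2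
      rw [hUconst a (ha a le_rfl), abs_of_pos (by linarith [hdI.1])] at h1
      have h2 : d - a = (c - a) / (K + 1) := by rw [hd]; ring
      rw [h2] at h1
      nlinarith
    have hnn : ∀ r ∈ Icc (0:ℝ) 1, 0 ≤ h (U d r) := by
      intro r hr
      rcases le_or_gt (U d r) a with h1 | h1
      · exact (ha _ h1).ge
      · exact (hpos _ ⟨h1, hlt r hr⟩).le
    have hmono : MonotoneOn (U d) (Icc 0 1) :=
      monotoneOn_of_radialMean_nonneg (hUd d) fun r hr =>
        intervalIntegral.integral_nonneg zero_le_one fun σ hσ => mul_nonneg (pow_nonneg hσ.1 n)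
          (hnn _ ⟨mul_nonneg hr.1 hσ.1, mul_le_one₀ hr.2 hσ.1 hσ.2⟩)
    refine ⟨d, hdI, fun r hr => radialMean_pos hh (hUc d) hr fun s hs => ?_⟩
    have h1 := hmono ⟨le_rfl, zero_le_one⟩ hs hs.1
    rw [hU0] at h1
    exact hpos _ ⟨hdI.1.trans_le h1, hlt s hs⟩
  have hall := isPreconnected_Ioo.subset_left_of_subset_union hAopen hBopen hdisj hcover hne
  obtain ⟨d, hd1, hd2⟩ : ∃ d, max a (c - η / K) < d ∧ d < c :=
    exists_between (max_lt hac (by linarith [div_pos hη hK]))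
  rw [max_lt_iff] at hd1
  obtain ⟨r, hr, hvr⟩ := hvne
  refine hvr (eigenfunction_eq_zero_of_increasing hn hk hkk' hvc hv hpc hp hp0 hp1 heq hh
    (hUd d) (c := c) (fun s hs => hnear _ ?_) (hall ⟨hd1.1, hd2⟩) r hr)
  have h1 := hUlip d c s hs
  rw [hUconst c hc, abs_sub_comm d c, abs_of_pos (sub_pos.2 hd2)] at h1
  refine h1.trans ?_
  have h2 : c - d ≤ η / K := by linarith [hd1.2]
  rw [le_div_iff₀ hK] at h2
  linarith

/-- Existence of a nonconstant nondecreasing positive radial solution of the Neumann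
problem `-Δu + u = f(u)` in the unit ball, assuming (f1)-(f3) and the spectral
condition (f4): `f` has a fixed point `u₀ > 0` with `f'(u₀) > λ₂^{rad}`. -/
theorem stmt_2 (N : ℕ) (hN : 2 ≤ N) (f : ℝ → ℝ)
    (hf_diff : ContDiffOn ℝ 1 f (Ici 0))
    (hf_mono : MonotoneOn f (Ici 0))
    (hf0 : f 0 = 0)
    (hf'0 : derivWithin f (Ici 0) 0 = 0)
    (hf_liminf : ((1 : ℝ) : EReal) <
      Filter.liminf (fun s : ℝ => ((f s / s : ℝ) : EReal)) Filter.atTop)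
    (lam2 : ℝ) (hlam2_gt : 1 < lam2)
    (hlam2_eig : IsRadialEigenvalue N lam2)
    (hlam2_min : ∀ lam ∈ Ioo (1:ℝ) lam2, ¬ IsRadialEigenvalue N lam)
    (u0 : ℝ) (hu0 : 0 < u0) (hfu0 : f u0 = u0)
    (hf'u0 : lam2 < derivWithin f (Ici 0) u0) :
    ∃ u u' u'' : ℝ → ℝ,
      (∀ r ∈ Icc (0:ℝ) 1, HasDerivWithinAt u (u' r) (Icc 0 1) r) ∧
      ContinuousOn u' (Icc 0 1) ∧
      (∀ r ∈ Ioo (0:ℝ) 1, HasDerivAt u' (u'' r) r) ∧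
      u' 0 = 0 ∧ u' 1 = 0 ∧
      (∀ r ∈ Icc (0:ℝ) 1, 0 < u r) ∧
      MonotoneOn u (Icc 0 1) ∧
      (∃ r ∈ Icc (0:ℝ) 1, ∃ s ∈ Icc (0:ℝ) 1, u r ≠ u s) ∧
      (∀ r ∈ Ioo (0:ℝ) 1,
        -u'' r - ((N : ℝ) - 1) / r * u' r + u r = f (u r)) := by
  obtain ⟨n, rfl⟩ : ∃ n, N = n + 1 := ⟨N - 1, by omega⟩
  have hn : 1 ≤ n := by omega
  have hcast : ((n + 1 : ℕ) : ℝ) - 1 = n := by push_cast; ring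
  rw [hcast]
  obtain ⟨v, p, p', hv, hpc, hp, hp0, hp1, hvne, hveq⟩ := hlam2_eig
  rw [hcast] at hveq
  have hfc : ContinuousOn f (Ici 0) := hf_diff.continuousOn
  -- the slope condition at the fixed point
  obtain ⟨m, hm1, hm2⟩ := exists_between hf'u0
  have hfd : HasDerivAt f (derivWithin f (Ici 0) u0) u0 := by
    have h1 : Ici (0:ℝ) ∈ 𝓝 u0 := Ici_mem_nhds hu0
    rw [derivWithin_of_mem_nhds h1]
    exact ((hf_diff.contDiffAt h1).differentiableAt (by norm_num)).hasDerivAt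
  obtain ⟨η, hη, hηu, hnear⟩ : ∃ η, 0 < η ∧ η < u0 ∧ ∀ x, |x - u0| ≤ η →
      (m - 1) * (x - u0) ^ 2 ≤ -(x - f x) * (x - u0) := by
    have h1 := (hasDerivAt_iff_tendsto_slope.1 hfd).eventually (lt_mem_nhds hm2)
    rw [eventually_nhdsWithin_iff, Metric.eventually_nhds_iff] at h1
    obtain ⟨e, he, h1⟩ := h1
    refine ⟨min e u0 / 2, by positivity, by linarith [min_le_right e u0], fun x hx => ?_⟩
    rcases eq_or_ne x u0 with rfl | hne
    · simp
    · have h2 := h1 (y := x) (by rw [Real.dist_eq]; linarith [min_le_left e u0, lt_min he hu0]) hne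
      rw [slope_def_field, hfu0] at h2
      have h3 : 0 < (x - u0) ^ 2 := by
        have := sub_ne_zero.2 hne
        positivity
      have h4 : (f x - u0) / (x - u0) * (x - u0) ^ 2 = (f x - u0) * (x - u0) := by
        have := sub_ne_zero.2 hne
        field_simp
      nlinarith [mul_lt_mul_of_pos_right h2 h3]
  -- the largest fixed point below `u0`
  have hqc : ContinuousOn (fun s => s - f s) (Ici 0) := continuousOn_id.sub hfc
  obtain ⟨a, ⟨haI, ha0⟩, hamax⟩ : ∃ a, IsGreatest
      (Icc 0 (u0 - η) ∩ (fun s => s - f s) ⁻¹' Iic 0) a := by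
    refine IsCompact.exists_isGreatest ?_ ⟨0, ⟨le_rfl, by linarith⟩, by simp [hf0]⟩
    exact isCompact_Icc.of_isClosed_subset
      ((hqc.mono Icc_subset_Ici_self).preimage_isClosed_of_isClosed isClosed_Icc isClosed_Iic)
      inter_subset_left
  have hau : a < u0 := by linarith [haI.2]
  have hqpos : ∀ s ∈ Ioo a u0, 0 < s - f s := by
    intro s hs
    rcases le_or_gt s (u0 - η) with h1 | h1
    · by_contra hcon
      exact (hamax ⟨⟨haI.1.trans hs.1.le, h1⟩, not_lt.1 hcon⟩).not_gt hs.1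
    · have h2 := hnear s (by rw [abs_of_neg (by linarith [hs.2])]; linarith)
      have h3 : 0 < (m - 1) * (s - u0) ^ 2 := by
        have : s - u0 ≠ 0 := by linarith [hs.2]
        have : 0 < m - 1 := by linarith
        positivity
      nlinarith [hs.2]
  have hqa : a - f a = 0 := by
    refine le_antisymm ha0 ?_
    have h1 : Tendsto (fun s => s - f s) (𝓝[>] a) (𝓝 (a - f a)) :=
      (hqc a haI.1).mono fun s (hs : a < s) => haI.1.trans hs.le
    refine ge_of_tendsto h1 ?_
    filter_upwards [Ioo_mem_nhdsGT hau] with s hs using (hqpos s hs).le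
  -- `s - f s` is bounded above, and the nonlinearity is truncated at an a priori bound
  obtain ⟨B, hB0, hB⟩ : ∃ B, 0 ≤ B ∧ ∀ s, 0 ≤ s → s - f s ≤ B := by
    have h1 := eventually_lt_of_lt_liminf hf_liminf
    obtain ⟨s0, hs0⟩ := eventually_atTop.1 (h1.and (eventually_gt_atTop 0))
    obtain ⟨B, hB⟩ := (isCompact_Icc (a := (0:ℝ)) (b := s0)).exists_bound_of_continuousOn
      (hqc.mono Icc_subset_Ici_self)
    refine ⟨max B 0, le_max_right _ _, fun s hs => ?_⟩
    rcases le_or_gt s s0 with h2 | h2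
    · exact ((le_abs_self _).trans (hB s ⟨hs, h2⟩)).trans (le_max_left _ _)
    · obtain ⟨h3, h4⟩ := hs0 s h2.le
      have h5 : 1 < f s / s := by exact_mod_cast h3
      rw [lt_div_iff₀ h4] at h5
      exact le_trans (by linarith) (le_max_right _ _)
  set M := u0 + B + η with hM
  have haM : a ≤ M := by linarith
  have hIM : Icc a M ⊆ Ici 0 := fun s hs => haI.1.trans hs.1
  obtain ⟨Kf, hKf⟩ := (hf_diff.mono hIM).exists_lipschitzOnWith one_ne_zero (convex_Icc a M)
    isCompact_Icc
  obtain ⟨C, hC⟩ := isCompact_Icc.exists_bound_of_continuousOn (hqc.mono hIM)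
  let h : ℝ → ℝ := fun x => projIcc a M haM x - f (projIcc a M haM x)
  have hh_eq : ∀ x ∈ Icc a M, h x = x - f x := fun x hx => by
    simp only [h, projIcc_of_mem haM hx]
  have hL : LipschitzWith (1 + Kf) h := by
    refine LipschitzWith.of_dist_le_mul fun x y => ?_
    have h1 := (LipschitzWith.projIcc haM).dist_le_mul x y
    rw [NNReal.coe_one, one_mul, Subtype.dist_eq, Real.dist_eq] at h1
    have h2 := hKf.dist_le_mul _ (projIcc a M haM x).2 _ (projIcc a M haM y).2
    rw [Real.dist_eq, Real.dist_eq] at h2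
    have h3 : (Kf:ℝ) * |(projIcc a M haM x : ℝ) - projIcc a M haM y| ≤ Kf * dist x y := by gcongr
    rw [Real.dist_eq]
    simp only [h]
    rw [show ∀ s t w z : ℝ, s - t - (w - z) = (s - w) - (t - z) by intros; ring]
    refine (abs_sub _ _).trans ?_
    rw [NNReal.coe_add, NNReal.coe_one, one_add_mul]
    exact add_le_add h1 (h2.trans h3)
  have hhB : ∀ x, h x ≤ B := fun x => hB _ (hIM (projIcc a M haM x).2)
  have hvc : ContinuousOn v (Icc 0 1) := fun r hr => (hv r hr).continuousWithinAt
  have hvne' : ∃ r ∈ Ioo (0:ℝ) 1, v r ≠ 0 := by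
    by_contra! hcon
    obtain ⟨r, hr, hne⟩ := hvne
    have h1 : EqOn v (fun _ => 0) (Icc 0 1) :=
      EqOn.of_subset_closure (s := Ioo 0 1) hcon hvc continuousOn_const Ioo_subset_Icc_self
        (by rw [closure_Ioo zero_ne_one])
    exact hne (h1 hr)
  obtain ⟨u, hu0I, hu, hgpos, hg1⟩ := exists_increasing_neumann_solution hn (k := lam2 - 1)
    (k' := m - 1) (by linarith) (by linarith) hvc
    (fun r hr => (hv r ⟨hr.1.le, hr.2.le⟩).hasDerivAt (Icc_mem_nhds hr.1 hr.2)) hpc hp hp0 hp1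
    (fun r hr => by linarith [hveq r hr]) hvne' hL
    (fun x => hC _ (projIcc a M haM x).2) hau hη
    (fun s hs => by simp only [h, projIcc_of_le_left haM hs, hqa])
    (fun s hs => by rw [hh_eq s ⟨hs.1.le, by linarith [hs.2]⟩]; exact hqpos s hs)
    (by rw [hh_eq u0 ⟨hau.le, by linarith⟩, hfu0, sub_self])
    (fun x hx => by
      have := abs_le.1 hx
      rw [hh_eq x ⟨by linarith [haI.2], by linarith⟩]
      exact hnear x hx)
  have hh := hL.continuous
  have huc : Continuous u := continuous_iff_continuousAt.2 fun r => (hu r).continuousAt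
  have hgc := continuous_radialMean (n := n) hh huc
  have hmono : MonotoneOn u (Icc 0 1) := monotoneOn_of_radialMean_nonneg hu fun r hr => by
    rcases hr.2.lt_or_eq with h1 | rfl
    · exact (hgpos r ⟨hr.1, h1⟩).le
    · exact hg1.ge
  have hlow : ∀ r ∈ Icc (0:ℝ) 1, a < u r := fun r hr =>
    hu0I.1.trans_le (hmono ⟨le_rfl, zero_le_one⟩ hr hr.1)
  have hup : ∀ r ∈ Icc (0:ℝ) 1, u r ≤ M := by
    intro r hr
    have h1 : MonotoneOn (fun r => B * r - u r) (Icc 0 1) := by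
      have hd : ∀ r, HasDerivAt (fun r => B * r - u r) (B - r * radialMean n h u r) r := fun r =>
        (((hasDerivAt_id r).const_mul B).sub (hu r)).congr_deriv (by simp)
      apply monotoneOn_of_deriv_nonneg (convex_Icc 0 1)
      · exact fun r _ => (hd r).continuousAt.continuousWithinAt
      · exact fun r _ => (hd r).differentiableAt.differentiableWithinAt
      · rw [interior_Icc]
        intro r hr
        rw [(hd r).deriv]
        have h2 := radialMean_le (n := n) (r := r) hh huc hB0 hhB
        nlinarith [hr.1, hr.2]
    have h2 := h1 ⟨le_rfl, zero_le_one⟩ hr hr.1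
    simp only [mul_zero] at h2
    nlinarith [hu0I.2, hr.1, hr.2]
  refine ⟨u, fun r => r * radialMean n h u r,
    fun r => h (u r) - n / r * (r * radialMean n h u r),
    fun r _ => (hu r).hasDerivWithinAt, (by fun_prop),
    fun r hr => hasDerivAt_mul_radialMean hh huc hr.1, by simp, by simp [hg1],
    fun r hr => haI.1.trans_lt (hlow r hr), hmono,
    ⟨0, by simp, 1, by simp, ?_⟩, fun r hr => ?_⟩
  · have h1 : StrictMonoOn u (Icc 0 1) := by
      apply strictMonoOn_of_deriv_pos (convex_Icc 0 1) huc.continuousOn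
      rw [interior_Icc]
      intro r hr
      rw [(hu r).deriv]
      exact mul_pos hr.1 (hgpos r ⟨hr.1.le, hr.2⟩)
    exact (h1 (by simp) (by simp) zero_lt_one).ne
  · have hr' : r ∈ Icc (0:ℝ) 1 := ⟨hr.1.le, hr.2.le⟩
    beta_reduce
    rw [hh_eq _ ⟨(hlow r hr').le, hup r hr'⟩]
    ring
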